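/- There exists a finite set Λ_B ⊂ S² ∩ ℚ³ of rational unit vectors, for each k ∈ Λ_B a pair of vectors k₁, k₂ ∈ ℝ³ such that (k, k₁, k₂) is an orthonormal basis of ℝ³, a constant ε_B > 0, and smooth functions γ_(k) : B_{ε_B}(0) → ℝ that are strictly positive on B_{ε_B}(0), where B_{ε_B}(0) is the open ball of radius ε_B (in the Frobenius norm) centered at the zero matrix in the space of 3×3 real skew-symmetric matrices, such that for every skew-symmetric 3×3 matrix A with |A| < ε_B one has the identity A = Σ_{k ∈ Λ_B} γ_(k)(A)² (k₁ ⊗ k₂ − k₂ ⊗ k₁). -/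

import Mathlib

/-!
STATEMENT 2: The First Geometric Lemma.
There is a finite set Λ_B of rational unit vectors k, with associated orthonormal bases
(k, k₁, k₂), a radius ε_B > 0, and smooth strictly positive functions γ_(k) on the ball
B_{ε_B}(0) (Frobenius norm) in the space of 3×3 skew-symmetric matrices, such that every
skew-symmetric A with |A| < ε_B satisfies
  A = Σ_{k ∈ Λ_B} γ_(k)(A)² (k₁ ⊗ k₂ − k₂ ⊗ k₁).
Here `Matrix.vecMulVec v w` is the tensor product v ⊗ w.
-/

noncomputable section

open Matrix

attribute [local instance] Matrix.normedAddCommGroup Matrix.normedSpace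

/-- Frobenius norm of a 3×3 real matrix. -/
def fnorm (A : Matrix (Fin 3) (Fin 3) ℝ) : ℝ := Real.sqrt (∑ i, ∑ j, (A i j) ^ 2)

/-- `(k, k₁, k₂)` is an orthonormal basis of ℝ³ (w.r.t. the Euclidean inner product). -/
def IsONBasis (k k₁ k₂ : Fin 3 → ℝ) : Prop :=
  (∑ i, k i ^ 2 = 1) ∧ (∑ i, k₁ i ^ 2 = 1) ∧ (∑ i, k₂ i ^ 2 = 1) ∧
  (∑ i, k i * k₁ i = 0) ∧ (∑ i, k i * k₂ i = 0) ∧ (∑ i, k₁ i * k₂ i = 0)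

lemma entry_lt {A : Matrix (Fin 3) (Fin 3) ℝ} (h : fnorm A < 1) (i j : Fin 3) :
    -1 < A i j ∧ A i j < 1 := by
  have h1 : ∑ i, ∑ j, (A i j) ^ 2 < 1 := by
    unfold fnorm at h
    rw [Real.sqrt_lt' one_pos] at h
    simpa using h
  have h2 : (A i j) ^ 2 ≤ ∑ i, ∑ j, (A i j) ^ 2 :=
    (Finset.single_le_sum (f := fun j => (A i j) ^ 2) (fun _ _ => sq_nonneg _)
      (Finset.mem_univ j)).trans
    (Finset.single_le_sum (f := fun i => ∑ j, (A i j) ^ 2)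
      (fun _ _ => Finset.sum_nonneg fun _ _ => sq_nonneg _) (Finset.mem_univ i))
  exact abs_lt.mp ((sq_lt_one_iff_abs_lt_one _).mp (h2.trans_lt h1))

/-- The six signed coordinate vectors. -/
def lamB : Finset (Fin 3 → ℝ) :=
  {![1, 0, 0], ![-1, 0, 0], ![0, 1, 0], ![0, -1, 0], ![0, 0, 1], ![0, 0, -1]}

/-- The affine function whose square root is the coefficient. -/
def coefB (k : Fin 3 → ℝ) (A : Matrix (Fin 3) (Fin 3) ℝ) : ℝ :=
  1 + (A 1 2 * k 0 + A 2 0 * k 1 + A 0 1 * k 2) / 2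

lemma mem_lamB {k : Fin 3 → ℝ} (hk : k ∈ lamB) :
    k = ![1, 0, 0] ∨ k = ![-1, 0, 0] ∨ k = ![0, 1, 0] ∨ k = ![0, -1, 0] ∨
      k = ![0, 0, 1] ∨ k = ![0, 0, -1] := by
  simpa [lamB] using hk

lemma coefB_pos {k : Fin 3 → ℝ} (hk : k ∈ lamB) {A : Matrix (Fin 3) (Fin 3) ℝ}
    (h : fnorm A < 1) : 0 < coefB k A := by
  have h1 := entry_lt h 1 2
  have h2 := entry_lt h 2 0
  have h3 := entry_lt h 0 1
  rcases mem_lamB hk with rfl | rfl | rfl | rfl | rfl | rfl <;> simp [coefB] <;> linarith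

lemma coefB_smooth (k : Fin 3 → ℝ) : ContDiff ℝ (⊤ : ℕ∞) (coefB k) := by
  have h : ∀ i j : Fin 3, ContDiff ℝ (⊤ : ℕ∞) (fun A : Matrix (Fin 3) (Fin 3) ℝ => A i j) :=
    fun i j => contDiff_apply_apply ℝ ℝ i j
  unfold coefB
  exact contDiff_const.add (((((h 1 2).mul contDiff_const).add ((h 2 0).mul contDiff_const)).add
    ((h 0 1).mul contDiff_const)).div_const _)

lemma sum_lamB {M : Type*} [AddCommMonoid M] (f : (Fin 3 → ℝ) → M) :
    ∑ k ∈ lamB, f k = f ![1, 0, 0] + (f ![-1, 0, 0] + (f ![0, 1, 0] + (f ![0, -1, 0] +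
      (f ![0, 0, 1] + f ![0, 0, -1])))) := by
  have e : (1 : ℝ) ≠ -1 := by norm_num
  unfold lamB
  rw [Finset.sum_insert, Finset.sum_insert, Finset.sum_insert, Finset.sum_insert,
    Finset.sum_insert, Finset.sum_singleton] <;> simp [e]

theorem first_geometric_lemma :
    ∃ (ΛB : Finset (Fin 3 → ℝ)) (k₁ k₂ : (Fin 3 → ℝ) → (Fin 3 → ℝ)) (εB : ℝ)
      (γ : (Fin 3 → ℝ) → Matrix (Fin 3) (Fin 3) ℝ → ℝ),
      0 < εB ∧ ΛB.Nonempty ∧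
      -- the elements of Λ_B are rational unit vectors
      (∀ k ∈ ΛB, (∀ i, ∃ q : ℚ, k i = (q : ℝ)) ∧ ∑ i, k i ^ 2 = 1) ∧
      -- each k ∈ Λ_B comes with an orthonormal basis (k, k₁, k₂)
      (∀ k ∈ ΛB, IsONBasis k (k₁ k) (k₂ k)) ∧
      -- the γ_(k) are smooth on the ball of radius ε_B around 0
      (∀ k ∈ ΛB, ContDiffOn ℝ (⊤ : ℕ∞) (γ k) {A | fnorm A < εB}) ∧
      -- the γ_(k) are strictly positive on the skew-symmetric matrices in that ball
      (∀ k ∈ ΛB, ∀ A : Matrix (Fin 3) (Fin 3) ℝ, Aᵀ = -A → fnorm A < εB → 0 < γ k A) ∧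
      -- the decomposition identity on skew-symmetric matrices with |A| < ε_B
      (∀ A : Matrix (Fin 3) (Fin 3) ℝ, Aᵀ = -A → fnorm A < εB →
        A = ∑ k ∈ ΛB, (γ k A) ^ 2 • (vecMulVec (k₁ k) (k₂ k) - vecMulVec (k₂ k) (k₁ k))) := by
  refine ⟨lamB, fun k i => k (i + 2), fun k i => (k (i + 1)) ^ 2, 1,
    fun k A => Real.sqrt (coefB k A), one_pos, ⟨![1, 0, 0], by simp [lamB]⟩, ?_, ?_, ?_, ?_, ?_⟩
  · intro k hk
    refine ⟨?_, ?_⟩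
    · have key : ∀ a b c : ℚ, ∀ i, ∃ q : ℚ, (![(a : ℝ), b, c] : Fin 3 → ℝ) i = (q : ℝ) := by
        intro a b c i
        refine ⟨![a, b, c] i, ?_⟩
        fin_cases i <;> rfl
      rcases mem_lamB hk with rfl | rfl | rfl | rfl | rfl | rfl
      · simpa using key 1 0 0
      · simpa using key (-1) 0 0
      · simpa using key 0 1 0
      · simpa using key 0 (-1) 0
      · simpa using key 0 0 1
      · simpa using key 0 0 (-1)
    · rcases mem_lamB hk with rfl | rfl | rfl | rfl | rfl | rfl <;> simp [Fin.sum_univ_three]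
  · intro k hk
    have e1 : (1 : Fin 3) + 2 = 0 := rfl
    have e2 : (2 : Fin 3) + 2 = 1 := rfl
    have e3 : (2 : Fin 3) + 1 = 0 := rfl
    have e4 : (1 : Fin 3) + 1 = 2 := rfl
    rcases mem_lamB hk with rfl | rfl | rfl | rfl | rfl | rfl <;>
      simp [IsONBasis, Fin.sum_univ_three, e1, e2, e3, e4]
  · intro k hk
    exact (coefB_smooth k).contDiffOn.sqrt fun A hA => (coefB_pos hk hA).ne'
  · intro k hk A _ hA
    exact Real.sqrt_pos.mpr (coefB_pos hk hA)
  · intro A hA hA1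
    have e1 : (1 : Fin 3) + 2 = 0 := rfl
    have e2 : (2 : Fin 3) + 2 = 1 := rfl
    have e3 : (2 : Fin 3) + 1 = 0 := rfl
    have e4 : (1 : Fin 3) + 1 = 2 := rfl
    have hs : ∀ i j, A j i = -A i j := fun i j => by
      simpa using congrFun (congrFun hA i) j
    have d0 := hs 0 0
    have d1 := hs 1 1
    have d2 := hs 2 2
    have o1 := hs 0 1
    have o2 := hs 0 2
    have o3 := hs 1 2
    rw [Finset.sum_congr rfl (fun k hk => by rw [Real.sq_sqrt (coefB_pos hk hA1).le]),
      sum_lamB]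
    ext i j
    fin_cases i <;> fin_cases j <;>
      simp [vecMulVec_apply, coefB, e1, e2, e3, e4] <;> linarith

end
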